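/- arXiv:alg-geom/9506002 — 2 statements merged into one kernel-verified Lean document; each statement's English description precedes it below -/
import Mathlib

section
/- Let f : ℝ² → ℝ be a real polynomial function in two variables with only finitely many critical points, and suppose the tangency polynomial T(x,y) = x·f_y(x,y) − y·f_x(x,y) is not identically zero. Then there exists R₀ > 0 such that for every connected component γ of the set {(x,y) : T(x,y) = 0 and ‖(x,y)‖ > R₀} (an 'end' of the curve of tangencies): γ is unbounded, the restriction of f to γ is injective, and there exists c ∈ ℝ ∪ {−∞, +∞} such that f(x_n, y_n) → c for every sequence of points (x_n, y_n) ∈ γ with ‖(x_n, y_n)‖ → ∞. -/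
open MvPolynomial Filter

/-- Evaluation of a polynomial in two variables at the point `(x, y)`. -/
noncomputable def evalP (f : MvPolynomial (Fin 2) ℝ) (x y : ℝ) : ℝ :=
  MvPolynomial.eval ![x, y] f

/-- `p` is a critical point of `f`: both partial derivatives vanish at `p`. -/
def IsCriticalPt (f : MvPolynomial (Fin 2) ℝ) (p : ℝ × ℝ) : Prop :=
  evalP (pderiv 0 f) p.1 p.2 = 0 ∧ evalP (pderiv 1 f) p.1 p.2 = 0

/-- The Euclidean norm on `ℝ²`. -/
noncomputable def enorm2 (p : ℝ × ℝ) : ℝ := Real.sqrt (p.1 ^ 2 + p.2 ^ 2)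

/-- The tangency polynomial `T = x·f_y − y·f_x` whose zero set is the curve of
tangencies of the level sets of `f` with the circles centered at the origin. -/
noncomputable def tangencyPoly (f : MvPolynomial (Fin 2) ℝ) : MvPolynomial (Fin 2) ℝ :=
  X 0 * pderiv 1 f - X 1 * pderiv 0 f

/-- The part of the curve of tangencies of `f` lying outside the closed disk of
radius `R` centered at the origin. -/
noncomputable def tangencyFar (f : MvPolynomial (Fin 2) ℝ) (R : ℝ) : Set (ℝ × ℝ) :=
  {q : ℝ × ℝ | evalP (tangencyPoly f) q.1 q.2 = 0 ∧ R < enorm2 q}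

/-!
In the rational parametrization of circles `T` becomes a polynomial in the radius `r` and the
parameter `t`. Replacing it by its radical over `ℝ(r)`, all its roots in `t` are simple for all but
finitely many `r`, so by the implicit function theorem the curve of tangencies is, far from the
origin, locally a differentiable graph over the radius. As the Euclidean norm is proper, it then
restricts to a covering of a half-line `(R₀, ∞)` by the far part of the curve, and each end is the
image of a global section `σ` with `‖σ r‖ = r`. On the curve of tangencies `grad f` is parallel to
the position vector while `σ'` has a nonzero radial component, so `(f ∘ σ)' r = 0` would make `σ r`
a critical point of `f`. Hence `f ∘ σ` is strictly monotone.
-/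

section Specialization

open scoped Polynomial

variable {R : Type*} [CommRing R] [IsDomain R]

lemma exists_map_eq_C_mul {K : Type*} [Field K] [Algebra R K] [IsFractionRing R K] (g : K[X]) :
    ∃ d : R, d ≠ 0 ∧ ∃ G : R[X], G.map (algebraMap R K) = Polynomial.C (algebraMap R K d) * g := by
  obtain ⟨d, hd, hG⟩ := IsLocalization.integerNormalization_spec (nonZeroDivisors R) g
  exact ⟨d, nonZeroDivisors.ne_zero hd, _,
    hG.trans (by rw [← Polynomial.smul_eq_C_mul, algebraMap_smul])⟩

variable (K L : Type*) [Field K] [Algebra R K] [IsFractionRing R K] [Field L]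

lemma exists_forall_map_dvd_map {P Q : R[X]}
    (h : P.map (algebraMap R K) ∣ Q.map (algebraMap R K)) :
    ∃ d : R, d ≠ 0 ∧ ∀ φ : R →+* L, φ d ≠ 0 → P.map φ ∣ Q.map φ := by
  obtain ⟨u, hu⟩ := h
  obtain ⟨d, hd, U, hU⟩ := exists_map_eq_C_mul (R := R) u
  have hPU : P * U = Polynomial.C d * Q := by
    apply Polynomial.map_injective _ (IsFractionRing.injective R K)
    simp only [Polynomial.map_mul, Polynomial.map_C, hU, hu]
    ring
  refine ⟨d, hd, fun φ hφ => ?_⟩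
  have hdvd : P.map φ ∣ Polynomial.C (φ d) * Q.map φ :=
    ⟨U.map φ, by simpa using congrArg (Polynomial.map φ) hPU.symm⟩
  exact (Polynomial.isUnit_C.2 hφ.isUnit).dvd_mul_left.1 hdvd

lemma exists_forall_isCoprime_map {P Q : R[X]}
    (h : IsCoprime (P.map (algebraMap R K)) (Q.map (algebraMap R K))) :
    ∃ d : R, d ≠ 0 ∧ ∀ φ : R →+* L, φ d ≠ 0 → IsCoprime (P.map φ) (Q.map φ) := by
  obtain ⟨a, b, hab⟩ := h
  obtain ⟨d, hd, A, hA⟩ := exists_map_eq_C_mul (R := R) a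
  obtain ⟨e, he, B, hB⟩ := exists_map_eq_C_mul (R := R) b
  have hAB : Polynomial.C e * A * P + Polynomial.C d * B * Q = Polynomial.C (d * e) := by
    apply Polynomial.map_injective _ (IsFractionRing.injective R K)
    simp only [Polynomial.map_add, Polynomial.map_mul, Polynomial.map_C, map_mul, hA, hB]
    linear_combination Polynomial.C (algebraMap R K d) * Polynomial.C (algebraMap R K e) * hab
  refine ⟨d * e, mul_ne_zero hd he, fun φ hφ => ?_⟩
  have hABφ : (Polynomial.C e * A).map φ * P.map φ + (Polynomial.C d * B).map φ * Q.map φ =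
      Polynomial.C (φ (d * e)) := by
    simpa only [Polynomial.map_add, Polynomial.map_mul, Polynomial.map_C]
      using congrArg (Polynomial.map φ) hAB
  refine ⟨Polynomial.C (φ (d * e))⁻¹ * (Polynomial.C e * A).map φ,
    Polynomial.C (φ (d * e))⁻¹ * (Polynomial.C d * B).map φ, ?_⟩
  rw [mul_assoc, mul_assoc, ← mul_add, hABφ, ← Polynomial.C_mul, inv_mul_cancel₀ hφ, Polynomial.C_1]

lemma exists_forall_separable_map [CharZero R] {P : R[X]} (hP : P ≠ 0) :
    ∃ (Q : R[X]) (d : R), d ≠ 0 ∧ ∀ φ : R →+* L, φ d ≠ 0 →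
      (Q.map φ).Separable ∧ ∀ t, (P.map φ).IsRoot t ↔ (Q.map φ).IsRoot t := by
  classical
  let K := FractionRing R
  have : CharZero K := charZero_of_injective_algebraMap (IsFractionRing.injective R K)
  let p : K[X] := UniqueFactorizationMonoid.radical (P.map (algebraMap R K))
  have hsep : p.Separable :=
    PerfectField.separable_iff_squarefree.2 UniqueFactorizationMonoid.squarefree_radical
  obtain ⟨n, hpow⟩ := UniqueFactorizationMonoid.exists_dvd_radical_self_pow
    ((Polynomial.map_ne_zero_iff (IsFractionRing.injective R K)).2 hP)
  obtain ⟨d₀, hd₀, Q, hQ⟩ := exists_map_eq_C_mul (R := R) p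
  have hassoc : Associated (Q.map (algebraMap R K)) p := by
    rw [hQ]
    exact associated_unit_mul_left _ _
      (Polynomial.isUnit_C.2 (IsFractionRing.to_map_ne_zero_of_mem_nonZeroDivisors
        (mem_nonZeroDivisors_of_ne_zero hd₀)).isUnit)
  obtain ⟨d₁, hd₁, hQP⟩ := exists_forall_map_dvd_map K L
    (hassoc.dvd.trans UniqueFactorizationMonoid.radical_dvd_self)
  obtain ⟨d₂, hd₂, hPQ⟩ := exists_forall_map_dvd_map K L (P := P) (Q := Q ^ n)
    (by rw [Polynomial.map_pow]; exact hpow.trans hassoc.symm.pow_pow.dvd)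
  obtain ⟨d₃, hd₃, hcop⟩ := exists_forall_isCoprime_map K L (P := Q) (Q := Polynomial.derivative Q)
    (by rw [← Polynomial.derivative_map]; exact hsep.of_dvd hassoc.dvd)
  refine ⟨Q, d₁ * d₂ * d₃, by simp [hd₁, hd₂, hd₃], fun φ hφ => ?_⟩
  obtain ⟨⟨h₁, h₂⟩, h₃⟩ : (φ d₁ ≠ 0 ∧ φ d₂ ≠ 0) ∧ φ d₃ ≠ 0 := by
    simpa only [map_mul, mul_ne_zero_iff] using hφ
  refine ⟨?_, fun t => ⟨fun ht => ?_, fun ht => ht.dvd (hQP φ h₁)⟩⟩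
  · rw [Polynomial.Separable, Polynomial.derivative_map]
    exact hcop φ h₃
  · have hroot := ht.dvd (hPQ φ h₂)
    rw [Polynomial.map_pow, Polynomial.IsRoot.def, Polynomial.eval_pow] at hroot
    exact eq_zero_of_pow_eq_zero hroot

end Specialization

lemma exists_map_eq_pow_mul_aeval_div {ι k A L : Type*} [CommSemiring k] [CommSemiring A]
    [Algebra k A] [Field L] [Algebra k L] (N : ι → A) (D : A) (T : MvPolynomial ι k) :
    ∃ (P : A) (n : ℕ), ∀ φ : A →ₐ[k] L, φ D ≠ 0 →
      φ P = φ D ^ n * aeval (fun i => φ (N i) / φ D) T := by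
  induction T using MvPolynomial.induction_on with
  | C a => exact ⟨algebraMap k A a, 0, fun φ _ => by simp⟩
  | add p q hp hq =>
    obtain ⟨P, m, hP⟩ := hp
    obtain ⟨Q, n, hQ⟩ := hq
    refine ⟨P * D ^ n + Q * D ^ m, m + n, fun φ hφ => ?_⟩
    simp only [map_add, map_mul, map_pow, hP φ hφ, hQ φ hφ]
    ring
  | mul_X p i hp =>
    obtain ⟨P, n, hP⟩ := hp
    refine ⟨P * N i, n + 1, fun φ hφ => ?_⟩
    simp only [map_mul, aeval_X, hP φ hφ]
    field_simp
    ring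

section LocalGraph

open Topology

variable {E E' : Type*} [NormedAddCommGroup E] [NormedSpace ℝ E]
  [NormedAddCommGroup E'] [NormedSpace ℝ E']

/-- Near `p`, the set `Z` is a graph over the values of `ρ`: it is the image of a section `s` of
`ρ` that is differentiable at `ρ p`. The section is a total function, of which only the germ at
`ρ p` matters. -/
def IsLocalGraphOver (ρ : E → ℝ) (Z : Set E) (p : E) : Prop :=
  ∃ s : ℝ → E, DifferentiableAt ℝ s (ρ p) ∧ s (ρ p) = p ∧
    (∀ᶠ r in 𝓝 (ρ p), s r ∈ Z ∧ ρ (s r) = r) ∧ ∀ᶠ q in 𝓝[Z] p, s (ρ q) = q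

namespace IsLocalGraphOver

variable {ρ : E → ℝ} {Z : Set E} {p : E}

lemma congr_set (h : IsLocalGraphOver ρ Z p) {Z' : Set E} (hZ : Z =ᶠ[𝓝 p] Z') :
    IsLocalGraphOver ρ Z' p := by
  obtain ⟨s, hs, hsp, hsZ, hZs⟩ := h
  have hsZZ' := hs.continuousAt.eventually (hsp.symm ▸ hZ)
  refine ⟨s, hs, hsp, ?_, nhdsWithin_eq_iff_eventuallyEq.2 hZ ▸ hZs⟩
  filter_upwards [hsZ, hsZZ'] with r ⟨hrZ, hr⟩ hrZZ'
  exact ⟨hrZZ'.mp hrZ, hr⟩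

lemma inter_preimage (h : IsLocalGraphOver ρ Z p) (hρ : ContinuousAt ρ p) {J : Set ℝ}
    (hJ : J ∈ 𝓝 (ρ p)) : IsLocalGraphOver ρ (Z ∩ ρ ⁻¹' J) p := by
  refine h.congr_set ?_
  filter_upwards [hρ hJ] with q hq using propext (and_iff_left hq).symm

lemma postcomp (h : IsLocalGraphOver ρ Z p) (hρ : ContinuousAt ρ p) {g k : ℝ → ℝ}
    (hk : DifferentiableAt ℝ k (g (ρ p))) (hkg : ∀ᶠ r in 𝓝 (ρ p), k (g r) = r)
    (hgk : ∀ᶠ u in 𝓝 (g (ρ p)), g (k u) = u) : IsLocalGraphOver (g ∘ ρ) Z p := by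
  obtain ⟨s, hs, hsp, hsZ, hZs⟩ := h
  have hkp : k (g (ρ p)) = ρ p := hkg.self_of_nhds
  refine ⟨s ∘ k, (hkp.symm ▸ hs).comp _ hk, by simp [hkp, hsp], ?_, ?_⟩
  · have hkZ := hk.continuousAt.eventually (hkp.symm ▸ hsZ)
    filter_upwards [hkZ, hgk] with u ⟨hsuZ, hsu⟩ hu
    exact ⟨hsuZ, by simp [hsu, hu]⟩
  · filter_upwards [hZs, (hρ.eventually hkg).filter_mono nhdsWithin_le_nhds] with q hsq hq
    simp [hq, hsq]

lemma abs (h : IsLocalGraphOver ρ Z p) (hρ : ContinuousAt ρ p) (hp : ρ p ≠ 0) :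
    IsLocalGraphOver (fun q => |ρ q|) Z p := by
  rcases hp.lt_or_gt with hneg | hpos
  · refine h.postcomp hρ (g := fun r => |r|) (k := fun u => -u) (by fun_prop) ?_ ?_
    · filter_upwards [gt_mem_nhds hneg] with r hr
      rw [abs_of_neg hr, neg_neg]
    · filter_upwards [lt_mem_nhds (abs_pos.2 hp)] with u hu
      rw [abs_neg, abs_of_pos hu]
  · refine h.postcomp hρ (g := fun r => |r|) (k := id) (by fun_prop) ?_ ?_
    · filter_upwards [lt_mem_nhds hpos] with r hr using abs_of_pos hr
    · filter_upwards [lt_mem_nhds (abs_pos.2 hp)] with u hu using abs_of_pos hu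

lemma of_comp {ρ : E' → ℝ} {Z : Set E'} {Φ : E → E'} {Θ : E' → E} {p : E'}
    (h : IsLocalGraphOver (ρ ∘ Φ) (Φ ⁻¹' Z) (Θ p)) (hΦ : DifferentiableAt ℝ Φ (Θ p))
    (hΘ : ContinuousAt Θ p) (hΦΘ : ∀ᶠ q in 𝓝 p, Φ (Θ q) = q) : IsLocalGraphOver ρ Z p := by
  obtain ⟨s, hs, hsp, hsZ, hZs⟩ := h
  have hp : Φ (Θ p) = p := hΦΘ.self_of_nhds
  simp only [Function.comp_apply, hp] at hs hsp hsZ hZs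
  have hΘZ : Tendsto Θ (𝓝[Z] p) (𝓝[Φ ⁻¹' Z] (Θ p)) := by
    refine tendsto_nhdsWithin_iff.2 ⟨hΘ.mono_left nhdsWithin_le_nhds, ?_⟩
    filter_upwards [hΦΘ.filter_mono nhdsWithin_le_nhds, self_mem_nhdsWithin] with q hq hqZ
    rwa [Set.mem_preimage, hq]
  refine ⟨Φ ∘ s, (hsp ▸ hΦ).comp _ hs, by simp [hsp, hp], hsZ, ?_⟩
  filter_upwards [hΘZ.eventually hZs, hΦΘ.filter_mono nhdsWithin_le_nhds] with q hs hq
  rw [hq] at hs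
  simp [hs, hq]

lemma differentiableAt_of_section (h : IsLocalGraphOver ρ Z p) {σ : ℝ → E}
    (hσ : ContinuousAt σ (ρ p)) (hσp : σ (ρ p) = p)
    (hσZ : ∀ᶠ r in 𝓝 (ρ p), σ r ∈ Z ∧ ρ (σ r) = r) : DifferentiableAt ℝ σ (ρ p) := by
  obtain ⟨s, hs, -, -, hZs⟩ := h
  have hσ' : Tendsto σ (𝓝 (ρ p)) (𝓝[Z] p) :=
    tendsto_nhdsWithin_iff.2 ⟨by simpa only [ContinuousAt, hσp] using hσ, hσZ.mono fun _ h => h.1⟩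
  refine hs.congr_of_eventuallyEq ?_
  filter_upwards [hσ'.eventually hZs, hσZ] with r hsr hr
  rw [← hsr, hr.2]

end IsLocalGraphOver

lemma isLocalGraphOver_fst_of_hasDerivAt {F : ℝ × ℝ → ℝ} {v : ℝ × ℝ} {F' : ℝ}
    (hF : ContDiffAt ℝ 1 F v) (hv : F v = 0) (hF' : HasDerivAt (fun t => F (v.1, t)) F' v.2)
    (hne : F' ≠ 0) : IsLocalGraphOver Prod.fst {w | F w = 0} v := by
  have hstrict : HasStrictFDerivAt F (fderiv ℝ F v) v := hF.hasStrictFDerivAt one_ne_zero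
  have hpartial : fderiv ℝ F v (0, 1) = F' :=
    (hstrict.hasFDerivAt.comp_hasDerivAt v.2
      ((hasDerivAt_const v.2 v.1).prodMk (hasDerivAt_id v.2))).unique hF'
  have hinv : (fderiv ℝ F v ∘L .inr ℝ ℝ ℝ).IsInvertible :=
    ⟨.unitsEquivAut ℝ (Units.mk0 _ hne), by ext; simp [hpartial]⟩
  let ψ := hstrict.implicitFunctionOfProdDomain hinv
  have hunique : ∀ᶠ w in 𝓝 v, F w = F v ↔ ψ w.1 = w.2 :=
    hstrict.eventually_apply_eq_iff_implicitFunctionOfProdDomain hinv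
  have hsolve : ∀ᶠ r in 𝓝 v.1, F (r, ψ r) = F v :=
    hstrict.eventually_apply_implicitFunctionOfProdDomain hinv
  have hψ : DifferentiableAt ℝ ψ v.1 :=
    (hstrict.hasStrictFDerivAt_implicitFunctionOfProdDomain hinv).hasFDerivAt.differentiableAt
  rw [hv] at hunique hsolve
  refine ⟨fun r => (r, ψ r), differentiableAt_id.prodMk hψ, ?_, ?_, ?_⟩
  · exact Prod.ext rfl (hunique.self_of_nhds.1 hv)
  · exact hsolve.mono fun r hr => ⟨hr, rfl⟩
  · filter_upwards [hunique.filter_mono nhdsWithin_le_nhds, self_mem_nhdsWithin] with w hw hwF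
    exact Prod.ext rfl (hw.1 hwF)

end LocalGraph

section Covering

open Topology

lemma isCoveringMap_of_isProperMap_of_isLocalHomeomorph {X Y : Type*} [TopologicalSpace X]
    [TopologicalSpace Y] [T2Space X] {f : X → Y} (hproper : IsProperMap f)
    (hlocal : IsLocalHomeomorph f) : IsCoveringMap f := by
  rw [isCoveringMap_iff_isCoveringMapOn_univ]
  refine hproper.isClosedMap.isCoveringMapOn_of_isLocalHomeomorphOn (fun y _ => ?_)
    hlocal.isLocalHomeomorphOn
  refine (hproper.isCompact_preimage isCompact_singleton).finite
    (IsDiscrete.of_openPartialHomeomorph f subset_rfl fun x _ => ?_)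
  obtain ⟨φ, hx, hφ⟩ := hlocal x
  exact ⟨φ, hx, hφ.symm⟩

lemma exists_section_range_eq_connectedComponent {X Y : Type*} [TopologicalSpace X]
    [TopologicalSpace Y] [SimplyConnectedSpace Y] [LocallyPathConnectedSpace Y] {f : X → Y}
    (hf : IsCoveringMap f) (x : X) :
    ∃ s : C(Y, X), Function.RightInverse s f ∧ Set.range s = connectedComponent x := by
  obtain ⟨s, ⟨hsx, hfs⟩, -⟩ := hf.existsUnique_continuousMap_lifts (.id Y) (f x) x rfl
  have hinv : Function.RightInverse s f := congrFun hfs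
  refine ⟨s, hinv, Set.Subset.antisymm ?_ fun z hz => ⟨f z, ?_⟩⟩
  · exact (isPreconnected_range s.continuous).subset_connectedComponent ⟨f x, hsx⟩
  · exact hf.eqOn_of_comp_eqOn isPreconnected_connectedComponent
      (s.continuous.comp hf.continuous).continuousOn continuousOn_id (fun z _ => hinv (f z))
      mem_connectedComponent hsx hz

lemma isProperMap_restrict_inter_preimage {X Y : Type*} [TopologicalSpace X]
    [TopologicalSpace Y] {f : X → Y} (hf : IsProperMap f) {C : Set X} (hC : IsClosed C)
    (J : Set Y) :
    IsProperMap (Set.MapsTo.restrict f (C ∩ f ⁻¹' J) J Set.inter_subset_right) :=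
  (hf.restrictPreimage J).comp
    (IsClosedEmbedding.inclusion Set.inter_subset_right
      (by simpa using hC.preimage continuous_subtype_val)).isProperMap

lemma exists_section_image_eq_connectedComponentIn {X Y : Type*} [TopologicalSpace X]
    [TopologicalSpace Y] {S : Set X} {J : Set Y} [SimplyConnectedSpace J]
    [LocallyPathConnectedSpace J] {f : X → Y} (hSJ : Set.MapsTo f S J)
    (hf : IsCoveringMap hSJ.restrict) {p : X} (hp : p ∈ S) :
    ∃ σ : Y → X, ContinuousOn σ J ∧ Set.RightInvOn σ f J ∧
      connectedComponentIn S p = σ '' J := by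
  classical
  obtain ⟨s, hs, hrange⟩ := exists_section_range_eq_connectedComponent hf ⟨p, hp⟩
  let σ : Y → X := fun y => if hy : y ∈ J then s ⟨y, hy⟩ else p
  have hσ : J.domRestrict σ = Subtype.val ∘ s := funext fun y => by simp [σ]
  refine ⟨σ, ?_, fun y hy => ?_, ?_⟩
  · rw [continuousOn_iff_continuous_domRestrict, hσ]
    exact continuous_subtype_val.comp s.continuous
  · rw [show σ y = s ⟨y, hy⟩ from congrFun hσ ⟨y, hy⟩]
    exact congrArg Subtype.val (hs ⟨y, hy⟩)
  · rw [connectedComponentIn_eq_image hp, ← hrange, ← Set.range_comp, ← hσ, Set.range_domRestrict]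

variable {E : Type*} [NormedAddCommGroup E] [NormedSpace ℝ E] {ρ : E → ℝ} {Z : Set E} {p : E}

lemma IsLocalGraphOver.nhds_le_map (h : IsLocalGraphOver ρ Z p) :
    𝓝 (ρ p) ≤ map ρ (𝓝[Z] p) := by
  obtain ⟨s, hs, hsp, hsZ, -⟩ := h
  have hs' : Tendsto s (𝓝 (ρ p)) (𝓝[Z] p) :=
    tendsto_nhdsWithin_iff.2 ⟨by simpa only [hsp] using hs.continuousAt.tendsto,
      hsZ.mono fun _ h => h.1⟩
  calc 𝓝 (ρ p) = map (ρ ∘ s) (𝓝 (ρ p)) :=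
        (map_id.symm.trans (map_congr (hsZ.mono fun _ h => h.2.symm)))
    _ ≤ map ρ (𝓝[Z] p) := map_mono hs'

lemma IsLocalGraphOver.exists_injOn (h : IsLocalGraphOver ρ Z p) :
    ∃ U, IsOpen U ∧ p ∈ U ∧ Set.InjOn ρ (Z ∩ U) := by
  obtain ⟨s, -, -, -, hZs⟩ := h
  obtain ⟨U, hU, hUo, hpU⟩ := mem_nhds_iff.1 (eventually_nhdsWithin_iff.1 hZs)
  exact ⟨U, hUo, hpU, fun a ha b hb hab => by rw [← hU ha.2 ha.1, ← hU hb.2 hb.1, hab]⟩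

lemma isLocalHomeomorph_domRestrict_of_isLocalGraphOver (hρ : ContinuousOn ρ Z)
    (h : ∀ p ∈ Z, IsLocalGraphOver ρ Z p) : IsLocalHomeomorph (Z.domRestrict ρ) := by
  have hopen : IsOpenMap (Z.domRestrict ρ) := by
    refine isOpenMap_iff_nhds_le.2 fun q => ?_
    rw [Set.domRestrict_eq, ← map_map, map_nhds_subtype_val]
    exact (h q q.2).nhds_le_map
  rw [isLocalHomeomorph_iff_isOpenEmbedding_restrict]
  intro q
  obtain ⟨U, hU, hqU, hinj⟩ := (h q q.2).exists_injOn
  have hU' : IsOpen (Subtype.val ⁻¹' U : Set Z) := hU.preimage continuous_subtype_val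
  refine ⟨_, hU'.mem_nhds hqU, .of_continuous_injective_isOpenMap
    (hρ.domRestrict.comp continuous_subtype_val) ?_ (hopen.domRestrict hU')⟩
  exact fun a b hab => Subtype.ext (Subtype.ext (hinj ⟨a.1.2, a.2⟩ ⟨b.1.2, b.2⟩ hab))

variable {C : Set E} {J : Set ℝ}

lemma isCoveringMap_restrict_of_isLocalGraphOver (hρ : IsProperMap ρ) (hC : IsClosed C)
    (hJ : IsOpen J) (hloc : ∀ q ∈ C ∩ ρ ⁻¹' J, IsLocalGraphOver ρ C q) :
    IsCoveringMap (Set.MapsTo.restrict ρ (C ∩ ρ ⁻¹' J) J Set.inter_subset_right) := by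
  have hproper := isProperMap_restrict_inter_preimage hρ hC J
  refine isCoveringMap_of_isProperMap_of_isLocalHomeomorph hproper
    (.of_comp ?_ hJ.isOpenEmbedding_subtypeVal.isLocalHomeomorph hproper.continuous)
  exact isLocalHomeomorph_domRestrict_of_isLocalGraphOver hρ.continuous.continuousOn
    fun q hq => (hloc q hq).inter_preimage hρ.continuous.continuousAt (hJ.mem_nhds hq.2)

theorem exists_differentiableOn_section_of_isLocalGraphOver (hρ : IsProperMap ρ)
    (hC : IsClosed C) (hJ : IsOpen J) (hJ' : Convex ℝ J)
    (hloc : ∀ q ∈ C ∩ ρ ⁻¹' J, IsLocalGraphOver ρ C q) (hp : p ∈ C ∩ ρ ⁻¹' J) :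
    ∃ σ : ℝ → E, DifferentiableOn ℝ σ J ∧ Set.RightInvOn σ ρ J ∧
      connectedComponentIn (C ∩ ρ ⁻¹' J) p = σ '' J := by
  have : ContractibleSpace J := hJ'.contractibleSpace ⟨ρ p, hp.2⟩
  have : LocallyPathConnectedSpace J := hJ.locallyPathConnectedSpace
  obtain ⟨σ, hcont, hinv, himage⟩ := exists_section_image_eq_connectedComponentIn
    (S := C ∩ ρ ⁻¹' J) (J := J) Set.inter_subset_right
    (isCoveringMap_restrict_of_isLocalGraphOver hρ hC hJ hloc) hp
  have hmem : Set.MapsTo σ J (C ∩ ρ ⁻¹' J) := fun r hr =>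
    connectedComponentIn_subset _ p (himage ▸ Set.mem_image_of_mem σ hr)
  refine ⟨σ, fun r hr => ?_, hinv, himage⟩
  have hdiff := (hloc _ (hmem hr)).differentiableAt_of_section (σ := σ)
  rw [hinv hr] at hdiff
  refine (hdiff (hcont.continuousAt (hJ.mem_nhds hr)) rfl ?_).differentiableWithinAt
  filter_upwards [hJ.mem_nhds hr] with u hu using ⟨(hmem hu).1, hinv hu⟩

end Covering

section Sections

variable {E : Type*} {ρ : E → ℝ} {σ : ℝ → E} {a : ℝ}

lemma not_isBounded_image_Ioi_of_rightInvOn [PseudoMetricSpace E] [ProperSpace E]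
    (hρ : Continuous ρ) (hσ : Set.RightInvOn σ ρ (Set.Ioi a)) :
    ¬ Bornology.IsBounded (σ '' Set.Ioi a) := fun hbdd => by
  have hsub : Set.Ioi a ⊆ ρ '' closure (σ '' Set.Ioi a) := fun r hr =>
    ⟨σ r, subset_closure (Set.mem_image_of_mem σ hr), hσ hr⟩
  exact not_bddAbove_Ioi a ((hbdd.isCompact_closure.image hρ).bddAbove.mono hsub)

lemma tendsto_comap_inf_principal_image {α β γ : Type*} {ρ : α → β} {σ : β → α} {l : Filter β}
    {m : Filter γ} {S : Set β} {f : α → γ} (hσ : Set.RightInvOn σ ρ S) (hf : Tendsto (f ∘ σ) l m) :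
    Tendsto f (comap ρ l ⊓ 𝓟 (σ '' S)) m := by
  have hσρ : ∀ᶠ q in comap ρ l ⊓ 𝓟 (σ '' S), σ (ρ q) = q := by
    filter_upwards [mem_inf_of_right (mem_principal_self _)]
    rintro - ⟨r, hr, rfl⟩
    rw [hσ hr]
  refine (hf.comp (tendsto_comap.mono_left inf_le_left)).congr' ?_
  filter_upwards [hσρ] with q hq
  simp [hq]

lemma strictMonoOn_or_strictAntiOn_of_deriv_ne_zero {g : ℝ → ℝ} {J : Set ℝ} (hJ : Convex ℝ J)
    (hg : ∀ r ∈ J, deriv g r ≠ 0) : StrictMonoOn g J ∨ StrictAntiOn g J := by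
  have hdiff : ∀ r ∈ J, DifferentiableAt ℝ g r := fun r hr =>
    differentiableAt_of_deriv_ne_zero (hg r hr)
  have hcont : ContinuousOn g J := fun r hr => (hdiff r hr).continuousAt.continuousWithinAt
  rcases hasDerivWithinAt_forall_lt_or_forall_gt_of_forall_ne hJ
    (fun r hr => (hdiff r hr).hasDerivAt.hasDerivWithinAt) hg with hneg | hpos
  · exact .inr (strictAntiOn_of_deriv_neg hJ hcont fun r hr => hneg r (interior_subset hr))
  · exact .inl (strictMonoOn_of_deriv_pos hJ hcont fun r hr => hpos r (interior_subset hr))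

lemma exists_tendsto_atTop_of_monotoneOn_Ioi {α β : Type*} [LinearOrder α] [NoMaxOrder α]
    [CompleteLinearOrder β] [TopologicalSpace β] [OrderTopology β] {f : α → β} {a : α}
    (hf : MonotoneOn f (Set.Ioi a)) : ∃ c, Tendsto f atTop (nhds c) := by
  obtain ⟨b, hb⟩ := exists_gt a
  have hmono : Monotone fun x => f (max x b) := fun x y hxy =>
    hf (hb.trans_le (le_max_right x b)) (hb.trans_le (le_max_right y b)) (max_le_max_right b hxy)
  refine ⟨_, (tendsto_atTop_iSup hmono).congr' ?_⟩
  filter_upwards [eventually_ge_atTop b] with x hx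
  rw [max_eq_left hx]

lemma exists_tendsto_coe_ereal_atTop {g : ℝ → ℝ}
    (hg : StrictMonoOn g (Set.Ioi a) ∨ StrictAntiOn g (Set.Ioi a)) :
    ∃ c : EReal, Tendsto (fun r => (g r : EReal)) atTop (nhds c) := by
  rcases hg with hg | hg
  · exact exists_tendsto_atTop_of_monotoneOn_Ioi
      (EReal.coe_strictMono.monotone.comp_monotoneOn hg.monotoneOn)
  · exact exists_tendsto_atTop_of_monotoneOn_Ioi (β := ERealᵒᵈ)
      (EReal.coe_strictMono.monotone.comp_antitoneOn hg.antitoneOn)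

end Sections

section BivariatePolynomial

open scoped Polynomial Topology

lemma contDiff_evalEval (Q : ℝ[X][X]) {k : WithTop ℕ∞} :
    ContDiff ℝ k fun v : ℝ × ℝ => Q.evalEval v.1 v.2 := by
  induction Q using Polynomial.induction_on' with
  | add p q hp hq => simpa only [Polynomial.evalEval_add] using hp.add hq
  | monomial n a =>
    have hmonomial : (fun v : ℝ × ℝ => (Polynomial.monomial n a).evalEval v.1 v.2) =
        fun v => Polynomial.aeval v.1 a * v.2 ^ n := by
      ext v
      simp [Polynomial.evalEval, Polynomial.eval_monomial, Polynomial.coe_aeval_eq_eval]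
    rw [hmonomial]
    exact ((Polynomial.contDiff_aeval a k).comp contDiff_fst).mul (contDiff_snd.pow n)

lemma exists_abs_le_of_isRoot {d : ℝ[X]} (hd : d ≠ 0) : ∃ R, ∀ r, d.IsRoot r → |r| ≤ R :=
  (Polynomial.finite_setOfPred_isRoot hd).isBounded.exists_norm_le

lemma isLocalGraphOver_fst_of_separable {Q : ℝ[X][X]} {v : ℝ × ℝ} (hv : Q.evalEval v.1 v.2 = 0)
    (hQ : (Q.map (Polynomial.evalRingHom v.1)).Separable) :
    IsLocalGraphOver Prod.fst {w | Q.evalEval w.1 w.2 = 0} v := by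
  have hderiv := (Q.map (Polynomial.evalRingHom v.1)).hasDerivAt v.2
  simp only [Polynomial.map_evalRingHom_eval] at hderiv
  refine isLocalGraphOver_fst_of_hasDerivAt (contDiff_evalEval Q).contDiffAt hv hderiv ?_
  have hroot : (Q.map (Polynomial.evalRingHom v.1)).aeval v.2 = 0 := by
    simpa only [Polynomial.coe_aeval_eq_eval, Polynomial.map_evalRingHom_eval] using hv
  simpa only [Polynomial.coe_aeval_eq_eval] using hQ.aeval_derivative_ne_zero hroot

lemma exists_isLocalGraphOver_fst_of_evalEval {P : ℝ[X][X]} (hP : P ≠ 0) :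
    ∃ R, ∀ v : ℝ × ℝ, R < |v.1| → P.evalEval v.1 v.2 = 0 →
      IsLocalGraphOver Prod.fst {w | P.evalEval w.1 w.2 = 0} v := by
  obtain ⟨Q, d, hd, hQ⟩ := exists_forall_separable_map ℝ hP
  obtain ⟨R, hR⟩ := exists_abs_le_of_isRoot hd
  have hroot : ∀ w : ℝ × ℝ, R < |w.1| → (P.evalEval w.1 w.2 = 0 ↔ Q.evalEval w.1 w.2 = 0) := by
    intro w hw
    simpa only [Polynomial.IsRoot.def, Polynomial.map_evalRingHom_eval] using
      (hQ (Polynomial.evalRingHom w.1) fun h => hw.not_ge (hR _ h)).2 w.2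
  refine ⟨R, fun v hv hvP => ?_⟩
  have hsep := (hQ (Polynomial.evalRingHom v.1) fun h => hv.not_ge (hR _ h)).1
  refine (isLocalGraphOver_fst_of_separable ((hroot v hv).1 hvP) hsep).congr_set ?_
  filter_upwards [continuous_fst.abs.continuousAt.eventually (lt_mem_nhds hv)] with w hw
  exact propext (hroot w hw).symm

end BivariatePolynomial

section Plane

open scoped Polynomial Topology

lemma enorm2_sq (q : ℝ × ℝ) : enorm2 q ^ 2 = q.1 ^ 2 + q.2 ^ 2 :=
  Real.sq_sqrt (by positivity)

lemma enorm2_nonneg (q : ℝ × ℝ) : 0 ≤ enorm2 q := Real.sqrt_nonneg _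

lemma continuous_enorm2 : Continuous enorm2 := by
  unfold enorm2
  fun_prop

lemma norm_le_enorm2 (q : ℝ × ℝ) : ‖q‖ ≤ enorm2 q :=
  max_le (Real.abs_le_sqrt (by nlinarith [sq_nonneg q.2]))
    (Real.abs_le_sqrt (by nlinarith [sq_nonneg q.1]))

lemma isProperMap_enorm2 : IsProperMap enorm2 :=
  isProperMap_iff_tendsto_cocompact.2 ⟨continuous_enorm2,
    (tendsto_atTop_mono norm_le_enorm2 tendsto_norm_cocompact_atTop).mono_right
      atTop_le_cocompact⟩

lemma continuous_evalP (T : MvPolynomial (Fin 2) ℝ) :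
    Continuous fun q : ℝ × ℝ => evalP T q.1 q.2 :=
  (MvPolynomial.continuous_eval T).comp (by fun_prop)

lemma evalP_apply_zero_apply_one (T : MvPolynomial (Fin 2) ℝ) (w : Fin 2 → ℝ) :
    evalP T (w 0) (w 1) = eval w T :=
  congrArg (eval · T) (FinVec.etaExpand_eq w)

/-- The rational parametrization of the circles centered at the origin: `t ↦ circleParam (r, t)`
parametrizes the circle of radius `|r|` without the point `(-r, 0)`. Both signs of `r` are needed
to reach every point of the plane. -/
noncomputable def circleParam (v : ℝ × ℝ) : ℝ × ℝ :=
  (v.1 * (1 - v.2 ^ 2) / (1 + v.2 ^ 2), 2 * v.1 * v.2 / (1 + v.2 ^ 2))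

lemma enorm2_circleParam (v : ℝ × ℝ) : enorm2 (circleParam v) = |v.1| := by
  have h : 1 + v.2 ^ 2 ≠ 0 := by positivity
  rw [enorm2, ← Real.sqrt_sq_eq_abs]
  congr 1
  simp only [circleParam]
  field_simp
  ring

lemma differentiable_circleParam : Differentiable ℝ circleParam := by
  have h : ∀ v : ℝ × ℝ, 1 + v.2 ^ 2 ≠ 0 := fun v => by positivity
  unfold circleParam
  fun_prop (disch := exact h _)

lemma circleParam_div {r x y : ℝ} (hr : r ^ 2 = x ^ 2 + y ^ 2) (hrx : r + x ≠ 0) :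
    circleParam (r, y / (r + x)) = (x, y) := by
  have ht : 1 + (y / (r + x)) ^ 2 ≠ 0 := by positivity
  refine Prod.ext ?_ ?_ <;> simp only [circleParam] <;> rw [div_eq_iff ht] <;> field_simp
  · linear_combination (x + r) * hr
  · linear_combination y * hr

lemma exists_evalEval_eq_mul_evalP_circleParam (T : MvPolynomial (Fin 2) ℝ) :
    ∃ (P : ℝ[X][X]) (n : ℕ), ∀ v : ℝ × ℝ,
      P.evalEval v.1 v.2 = (1 + v.2 ^ 2) ^ n * evalP T (circleParam v).1 (circleParam v).2 := by
  let r : ℝ[X][X] := Polynomial.C Polynomial.X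
  let t : ℝ[X][X] := Polynomial.X
  obtain ⟨P, n, hP⟩ := exists_map_eq_pow_mul_aeval_div (L := ℝ)
    ![r * (1 - t ^ 2), 2 * r * t] (1 + t ^ 2) T
  refine ⟨P, n, fun v => ?_⟩
  let φ : ℝ[X][X] →ₐ[ℝ] ℝ := Polynomial.aevalAeval v.1 v.2
  have hr : φ r = v.1 := Polynomial.aevalAeval_X _ _
  have ht : φ t = v.2 := Polynomial.aevalAeval_Y _ _
  have hD : φ (1 + t ^ 2) = 1 + v.2 ^ 2 := by simp only [map_add, map_one, map_pow, ht]
  have hN : (fun i => φ (![r * (1 - t ^ 2), 2 * r * t] i) / φ (1 + t ^ 2)) =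
      ![(circleParam v).1, (circleParam v).2] := by
    ext i
    fin_cases i <;> simp [circleParam, hr, ht, map_ofNat φ 2]
  have hφ := hP φ (by rw [hD]; positivity)
  rw [hN, hD, MvPolynomial.aeval_eq_eval] at hφ
  exact (congrFun (Polynomial.coe_aevalAeval_eq_evalEval _ _) P).symm.trans hφ

lemma ne_zero_of_forall_evalEval_eq_mul_evalP_circleParam {T : MvPolynomial (Fin 2) ℝ}
    (hT : T ≠ 0) {P : ℝ[X][X]} {n : ℕ} (hP : ∀ v : ℝ × ℝ,
      P.evalEval v.1 v.2 = (1 + v.2 ^ 2) ^ n * evalP T (circleParam v).1 (circleParam v).2) :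
    P ≠ 0 := by
  rintro rfl
  refine hT (MvPolynomial.funext_set (fun _ => Set.Ioi (0 : ℝ)) (fun _ => Set.Ioi_infinite 0)
    fun w hw => ?_)
  have hw₀ : 0 < w 0 := hw 0 trivial
  have hparam : circleParam (enorm2 (w 0, w 1), w 1 / (enorm2 (w 0, w 1) + w 0)) = (w 0, w 1) :=
    circleParam_div (enorm2_sq _) (add_pos_of_nonneg_of_pos (enorm2_nonneg _) hw₀).ne'
  have hzero := hP (enorm2 (w 0, w 1), w 1 / (enorm2 (w 0, w 1) + w 0))
  rw [hparam, Polynomial.evalEval_zero, zero_eq_mul, or_iff_right (by positivity)] at hzero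
  rw [map_zero, ← evalP_apply_zero_apply_one, hzero]

lemma exists_continuousAt_circleParam_rightInverse {p : ℝ × ℝ} (hp : p ≠ 0) :
    ∃ Θ : ℝ × ℝ → ℝ × ℝ, ContinuousAt Θ p ∧ ∀ᶠ q in 𝓝 p, circleParam (Θ q) = q := by
  have hpos : 0 < enorm2 p := (norm_pos_iff.2 hp).trans_le (norm_le_enorm2 p)
  obtain ⟨ε, hε, hεp⟩ : ∃ ε : ℝ, ε ^ 2 = 1 ∧ ε * enorm2 p + p.1 ≠ 0 := by
    rcases eq_or_ne (enorm2 p + p.1) 0 with h | h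
    · exact ⟨-1, by norm_num, by linarith⟩
    · exact ⟨1, by norm_num, by simpa using h⟩
  have hden : Continuous fun q : ℝ × ℝ => ε * enorm2 q + q.1 := by
    have := continuous_enorm2
    fun_prop
  refine ⟨fun q => (ε * enorm2 q, q.2 / (ε * enorm2 q + q.1)), ?_, ?_⟩
  · have := continuous_enorm2
    exact ContinuousAt.prodMk (by fun_prop)
      (continuous_snd.continuousAt.div hden.continuousAt hεp)
  · filter_upwards [hden.continuousAt.eventually_ne hεp] with q hq
    exact circleParam_div (by rw [mul_pow, hε, one_mul, enorm2_sq]) hq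

theorem exists_isLocalGraphOver_enorm2 {T : MvPolynomial (Fin 2) ℝ} (hT : T ≠ 0) :
    ∃ R, ∀ p : ℝ × ℝ, R < enorm2 p → evalP T p.1 p.2 = 0 →
      IsLocalGraphOver enorm2 {q | evalP T q.1 q.2 = 0} p := by
  obtain ⟨P, n, hP⟩ := exists_evalEval_eq_mul_evalP_circleParam T
  obtain ⟨R, hR⟩ := exists_isLocalGraphOver_fst_of_evalEval
    (ne_zero_of_forall_evalEval_eq_mul_evalP_circleParam hT hP)
  have hzero : ∀ v : ℝ × ℝ,
      P.evalEval v.1 v.2 = 0 ↔ evalP T (circleParam v).1 (circleParam v).2 = 0 := fun v => by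
    rw [hP, mul_eq_zero, or_iff_right (by positivity)]
  refine ⟨max R 0, fun p hp hTp => ?_⟩
  obtain ⟨hpR, hp₀⟩ := max_lt_iff.1 hp
  obtain ⟨Θ, hΘ, hinv⟩ := exists_continuousAt_circleParam_rightInverse (p := p)
    (by rintro rfl; simp [enorm2] at hp₀)
  have hΘp : circleParam (Θ p) = p := hinv.self_of_nhds
  have habs : |(Θ p).1| = enorm2 p := by rw [← enorm2_circleParam, hΘp]
  refine IsLocalGraphOver.of_comp ?_ (differentiable_circleParam _) hΘ hinv
  have hgraph := (hR (Θ p) (habs ▸ hpR) ((hzero _).2 (by rwa [hΘp]))).abs continuousAt_fst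
    (abs_pos.1 (habs ▸ hp₀))
  simp only [hzero, ← enorm2_circleParam] at hgraph
  exact hgraph

end Plane

section Derivative

lemma hasDerivAt_eval {𝕜 ι : Type*} [NontriviallyNormedField 𝕜] [Fintype ι]
    (f : MvPolynomial ι 𝕜) {x : 𝕜 → ι → 𝕜} {x' : ι → 𝕜} {r : 𝕜}
    (hx : ∀ i, HasDerivAt (fun u => x u i) (x' i) r) :
    HasDerivAt (fun u => eval (x u) f) (∑ i, eval (x r) (pderiv i f) * x' i) r := by
  classical
  induction f using MvPolynomial.induction_on with
  | C a => simpa using hasDerivAt_const r a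
  | add p q hp hq => simpa [add_mul, Finset.sum_add_distrib] using hp.fun_add hq
  | mul_X p i hp =>
    simp only [map_mul, eval_X, Derivation.leibniz, smul_eq_mul, map_add, pderiv_X, add_mul,
      Finset.sum_add_distrib]
    refine (hp.fun_mul (hx i)).congr_deriv ?_
    rw [add_comm, Finset.sum_mul]
    congr 1
    · simp [Pi.single_apply, apply_ite]
    · exact Finset.sum_congr rfl fun j _ => by ring

lemma hasDerivAt_evalP (f : MvPolynomial (Fin 2) ℝ) {σ : ℝ → ℝ × ℝ} {σ' : ℝ × ℝ} {r : ℝ}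
    (hσ : HasDerivAt σ σ' r) :
    HasDerivAt (fun u => evalP f (σ u).1 (σ u).2)
      (evalP (pderiv 0 f) (σ r).1 (σ r).2 * σ'.1 + evalP (pderiv 1 f) (σ r).1 (σ r).2 * σ'.2)
      r := by
  simpa [evalP, Fin.sum_univ_two] using hasDerivAt_eval f (x := fun u => ![(σ u).1, (σ u).2])
    (x' := ![σ'.1, σ'.2]) (Fin.forall_fin_two.2 ⟨hσ.fst, hσ.snd⟩)

lemma evalP_tangencyPoly (f : MvPolynomial (Fin 2) ℝ) (x y : ℝ) :
    evalP (tangencyPoly f) x y = x * evalP (pderiv 1 f) x y - y * evalP (pderiv 0 f) x y := by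
  simp [evalP, tangencyPoly]

lemma eq_zero_of_parallel_of_orthogonal {x y a b x' y' : ℝ} (hparallel : x * b - y * a = 0)
    (hradial : x * x' + y * y' ≠ 0) (hortho : a * x' + b * y' = 0) : a = 0 ∧ b = 0 := by
  have hnorm : x ^ 2 + y ^ 2 ≠ 0 := fun h => by
    obtain ⟨hx, hy⟩ : x = 0 ∧ y = 0 := by constructor <;> nlinarith [sq_nonneg x, sq_nonneg y]
    simp [hx, hy] at hradial
  have hinner : x * a + y * b = 0 := by
    refine (mul_eq_zero.1 ?_).resolve_right hradial
    linear_combination (x ^ 2 + y ^ 2) * hortho + (y * x' - x * y') * hparallel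
  constructor
  · refine (mul_eq_zero.1 ?_).resolve_left hnorm
    linear_combination x * hinner - y * hparallel
  · refine (mul_eq_zero.1 ?_).resolve_left hnorm
    linear_combination y * hinner + x * hparallel

lemma mul_add_mul_eq_of_enorm2_eventuallyEq {σ : ℝ → ℝ × ℝ} {σ' : ℝ × ℝ} {r : ℝ}
    (hσ : HasDerivAt σ σ' r) (hnorm : ∀ᶠ u in nhds r, enorm2 (σ u) = u) :
    (σ r).1 * σ'.1 + (σ r).2 * σ'.2 = r := by
  have hsq : HasDerivAt (fun u => (σ u).1 ^ 2 + (σ u).2 ^ 2) (2 * r) r := by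
    refine (HasDerivAt.congr_deriv ((hasDerivAt_id r).pow 2) (by simp)).congr_of_eventuallyEq ?_
    filter_upwards [hnorm] with u hu
    simp [← enorm2_sq, hu]
  have hfst : HasDerivAt (fun u => (σ u).1) σ'.1 r := hσ.fst
  have hsnd : HasDerivAt (fun u => (σ u).2) σ'.2 r := hσ.snd
  have hderiv := ((hfst.fun_pow 2).fun_add (hsnd.fun_pow 2)).unique hsq
  simp only [Nat.cast_ofNat, Nat.add_one_sub_one, pow_one] at hderiv
  linarith

lemma deriv_evalP_comp_ne_zero {f : MvPolynomial (Fin 2) ℝ} {σ : ℝ → ℝ × ℝ} {r : ℝ}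
    (hσ : DifferentiableAt ℝ σ r) (hnorm : ∀ᶠ u in nhds r, enorm2 (σ u) = u) (hr : r ≠ 0)
    (hT : evalP (tangencyPoly f) (σ r).1 (σ r).2 = 0) (hcrit : ¬ IsCriticalPt f (σ r)) :
    deriv (fun u => evalP f (σ u).1 (σ u).2) r ≠ 0 := by
  rw [(hasDerivAt_evalP f hσ.hasDerivAt).deriv]
  refine fun hzero => hcrit (eq_zero_of_parallel_of_orthogonal (x := (σ r).1) (y := (σ r).2)
    ?_ ?_ hzero)
  · rwa [← evalP_tangencyPoly]
  · rwa [mul_add_mul_eq_of_enorm2_eventuallyEq hσ.hasDerivAt hnorm]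

end Derivative

section TangencyCurve

theorem exists_section_of_connectedComponentIn_tangencyFar {f : MvPolynomial (Fin 2) ℝ}
    (hT : tangencyPoly f ≠ 0) :
    ∃ R₁, ∀ R ≥ R₁, ∀ p ∈ tangencyFar f R, ∃ σ : ℝ → ℝ × ℝ,
      DifferentiableOn ℝ σ (Set.Ioi R) ∧ Set.RightInvOn σ enorm2 (Set.Ioi R) ∧
        connectedComponentIn (tangencyFar f R) p = σ '' Set.Ioi R := by
  obtain ⟨R₁, hR₁⟩ := exists_isLocalGraphOver_enorm2 hT
  refine ⟨R₁, fun R hR p hp => ?_⟩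
  exact exists_differentiableOn_section_of_isLocalGraphOver isProperMap_enorm2
    (isClosed_eq (continuous_evalP _) continuous_const) isOpen_Ioi (convex_Ioi R)
    (fun q hq => hR₁ q (hR.trans_lt hq.2) hq.1) hp

lemma strictMonoOn_or_strictAntiOn_evalP_comp {f : MvPolynomial (Fin 2) ℝ} {R : ℝ} (hR : 0 ≤ R)
    (hcrit : ∀ p, IsCriticalPt f p → enorm2 p ≤ R) {σ : ℝ → ℝ × ℝ}
    (hσ : DifferentiableOn ℝ σ (Set.Ioi R)) (hinv : Set.RightInvOn σ enorm2 (Set.Ioi R))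
    (hT : Set.MapsTo σ (Set.Ioi R) (tangencyFar f R)) :
    StrictMonoOn (fun r => evalP f (σ r).1 (σ r).2) (Set.Ioi R) ∨
      StrictAntiOn (fun r => evalP f (σ r).1 (σ r).2) (Set.Ioi R) := by
  refine strictMonoOn_or_strictAntiOn_of_deriv_ne_zero (convex_Ioi R) fun r hr => ?_
  have hnhds : Set.Ioi R ∈ nhds r := Ioi_mem_nhds hr
  exact deriv_evalP_comp_ne_zero (hσ.differentiableAt hnhds) (mem_of_superset hnhds hinv)
    (hR.trans_lt hr).ne' (hT hr).1 fun h => (hT hr).2.not_ge (hcrit _ h)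

theorem ends_of_tangency_curve_general
    (f : MvPolynomial (Fin 2) ℝ)
    (hcrit : Bornology.IsBounded {p : ℝ × ℝ | IsCriticalPt f p})
    (hT : tangencyPoly f ≠ 0) :
    ∃ R₀ : ℝ, 0 < R₀ ∧
      ∀ p ∈ tangencyFar f R₀,
        ¬ Bornology.IsBounded (connectedComponentIn (tangencyFar f R₀) p) ∧
        Set.InjOn (fun q : ℝ × ℝ => evalP f q.1 q.2)
          (connectedComponentIn (tangencyFar f R₀) p) ∧
        ∃ c : EReal, ∀ z : ℕ → ℝ × ℝ,
          (∀ n, z n ∈ connectedComponentIn (tangencyFar f R₀) p) →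
          Tendsto (fun n => enorm2 (z n)) atTop atTop →
          Tendsto (fun n => ((evalP f (z n).1 (z n).2 : ℝ) : EReal)) atTop (nhds c) := by
  obtain ⟨R₁, hends⟩ := exists_section_of_connectedComponentIn_tangencyFar hT
  obtain ⟨R₂, hR₂⟩ := (hcrit.isCompact_closure.image continuous_enorm2).bddAbove
  obtain ⟨R₀, hR₁, hR₂', hR₀⟩ : ∃ R₀, R₁ ≤ R₀ ∧ R₂ ≤ R₀ ∧ 0 < R₀ :=
    ((eventually_ge_atTop R₁).and ((eventually_ge_atTop R₂).and (eventually_gt_atTop 0))).exists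
  refine ⟨R₀, hR₀, fun p hp => ?_⟩
  obtain ⟨σ, hσ, hinv, hγ⟩ := hends R₀ hR₁ p hp
  have hσT : Set.MapsTo σ (Set.Ioi R₀) (tangencyFar f R₀) :=
    Set.mapsTo_iff_image_subset.2 (hγ ▸ connectedComponentIn_subset _ p)
  have hmono := strictMonoOn_or_strictAntiOn_evalP_comp hR₀.le
    (fun q hq => (hR₂ (Set.mem_image_of_mem _ (subset_closure hq))).trans hR₂') hσ hinv hσT
  rw [hγ]
  refine ⟨not_isBounded_image_Ioi_of_rightInvOn continuous_enorm2 hinv, ?_, ?_⟩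
  · exact Set.InjOn.image_of_comp (hmono.elim StrictMonoOn.injOn StrictAntiOn.injOn)
  · obtain ⟨c, hc⟩ := exists_tendsto_coe_ereal_atTop hmono
    have hγc := tendsto_comap_inf_principal_image
      (f := fun q : ℝ × ℝ => ((evalP f q.1 q.2 : ℝ) : EReal)) hinv hc
    exact ⟨c, fun z hz hzρ => hγc.comp
      (tendsto_inf.2 ⟨tendsto_comap_iff.2 hzρ, tendsto_principal.2 (.of_forall hz)⟩)⟩

theorem ends_of_tangency_curve
    (f : MvPolynomial (Fin 2) ℝ)
    (hfin : {p : ℝ × ℝ | IsCriticalPt f p}.Finite)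
    (hT : tangencyPoly f ≠ 0) :
    ∃ R₀ : ℝ, 0 < R₀ ∧
      ∀ p ∈ tangencyFar f R₀,
        ¬ Bornology.IsBounded (connectedComponentIn (tangencyFar f R₀) p) ∧
        Set.InjOn (fun q : ℝ × ℝ => evalP f q.1 q.2)
          (connectedComponentIn (tangencyFar f R₀) p) ∧
        ∃ c : EReal, ∀ z : ℕ → ℝ × ℝ,
          (∀ n, z n ∈ connectedComponentIn (tangencyFar f R₀) p) →
          Tendsto (fun n => enorm2 (z n)) atTop atTop →
          Tendsto (fun n => ((evalP f (z n).1 (z n).2 : ℝ) : EReal)) atTop (nhds c) :=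
  ends_of_tangency_curve_general f hfin.isBounded hT

end TangencyCurve
end

section
/- Fix d ≥ 1 and identify the real polynomials in two variables of degree at most d with the finite-dimensional real vector space of their coefficient tuples, equipped with its standard topology. Call a polynomial g of degree at most d Morse-generic if (i) its degree-d homogeneous part g_d is nonzero and has no repeated real linear factors (for every (a,b) ≠ (0,0), (b·x − a·y)² does not divide g_d), and (ii) every real critical point of g is nondegenerate (the Hessian determinant g_xx·g_yy − g_xy² is nonzero there). Then the set of Morse-generic polynomials is an open and dense subset of the space of polynomials of degree at most d. -/
open MvPolynomial Filter

/-- The polynomial of degree at most `d` with coefficient tuple `v`: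
`∑_{j+k ≤ d} v_{jk} x^j y^k`.  The space of coefficient tuples
`{q : ℕ × ℕ // q.1 + q.2 ≤ d} → ℝ` is a finite-dimensional real vector space
with its standard (product) topology. -/
noncomputable def polyOf (d : ℕ) (v : {q : ℕ × ℕ // q.1 + q.2 ≤ d} → ℝ) :
    MvPolynomial (Fin 2) ℝ :=
  ∑ᶠ q : {q : ℕ × ℕ // q.1 + q.2 ≤ d}, C (v q) * X 0 ^ q.1.1 * X 1 ^ q.1.2

/-- `g` is Morse-generic (for degree `d`): its degree-`d` homogeneous part is nonzero
and has no repeated real linear factors, and all its real critical points are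
nondegenerate. -/
def MorseGeneric (d : ℕ) (g : MvPolynomial (Fin 2) ℝ) : Prop :=
  homogeneousComponent d g ≠ 0 ∧
  (∀ a b : ℝ, (a, b) ≠ ((0 : ℝ), (0 : ℝ)) →
    ¬ ((C b * X 0 - C a * X 1) ^ 2 ∣ homogeneousComponent d g)) ∧
  ∀ x y : ℝ, evalP (pderiv 0 g) x y = 0 → evalP (pderiv 1 g) x y = 0 →
    evalP (pderiv 0 (pderiv 0 g)) x y * evalP (pderiv 1 (pderiv 1 g)) x y -
      (evalP (pderiv 1 (pderiv 0 g)) x y) ^ 2 ≠ 0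

/-!
By Euler's identity, a real binary form of positive degree has a repeated real linear factor `ℓ`
exactly when its gradient vanishes at the real zero of `ℓ`. Homogenizing `∇g` with a further
variable `z` therefore turns both genericity conditions into one condition on the points `(p, z)` of
projective space: at infinity (`z = 0`) the homogenized gradient, which is `∇g_d` there, does not
vanish, and at finite points it vanishes only where the Hessian of `g` does not degenerate. This
condition is open in the pair of `g` and the point, so compactness of the unit sphere makes it open
in `g`.

Density follows from Sard's theorem. The polynomial `g - c₀ x - c₁ y` is Morse as soon as `c` is a
regular value of `∇g`. For the leading form `h`, make the coefficient of `y ^ d` nonzero; the real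
zeros of `h - s x ^ d` then all lie in the chart `x = 1` and are simple as soon as `s` is a regular
value of `m ↦ h(1, m)`.
-/

open MeasureTheory Topology

section HomogeneousPolynomials

variable {σ R K A : Type*} {n : ℕ}

theorem aeval_smul_of_isHomogeneous [CommSemiring R] [CommSemiring A] [Algebra R A]
    {φ : MvPolynomial σ R} (hφ : φ.IsHomogeneous n) (c : A) (f : σ → A) :
    aeval (c • f) φ = c ^ n * aeval f φ := by
  simp only [aeval_def, eval₂_eq, Finset.mul_sum]
  refine Finset.sum_congr rfl fun m hm => ?_
  simp only [Pi.smul_apply, smul_eq_mul, mul_pow, Finset.prod_mul_distrib,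
    Finset.prod_pow_eq_pow_sum, hφ.degree_eq_sum_deg_support hm]
  ring

theorem eval_smul_of_isHomogeneous [CommSemiring R] {φ : MvPolynomial σ R}
    (hφ : φ.IsHomogeneous n) (c : R) (p : σ → R) : eval (c • p) φ = c ^ n * eval p φ := by
  simpa only [aeval_eq_eval] using aeval_smul_of_isHomogeneous hφ c p

theorem homogeneousComponent_mul_of_left_isHomogeneous [CommSemiring R] {m : ℕ}
    {φ : MvPolynomial σ R} (hφ : φ.IsHomogeneous m) (ψ : MvPolynomial σ R) :
    homogeneousComponent (m + n) (φ * ψ) = φ * homogeneousComponent n ψ := by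
  let _ := gradedAlgebra (σ := σ) (R := R)
  have h := DirectSum.coe_decompose_mul_add_of_left_mem (homogeneousSubmodule σ R)
    (i := m) (j := n) (b := ψ) hφ
  have h_decompose : ∀ χ i, (DirectSum.decompose (homogeneousSubmodule σ R) χ i : MvPolynomial σ R)
      = homogeneousComponent i χ := decomposition.decompose'_apply
  rwa [h_decompose, h_decompose] at h

theorem aeval_eq_zero_of_eval_eq_zero [Field K] [CommRing A] [Algebra K A] {φ : MvPolynomial σ K}
    (hφ : φ.IsHomogeneous n) {p : σ → K} (hp : eval p φ = 0) {j : σ} (hj : p j ≠ 0) {f : σ → A}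
    (hf : ∀ i, p j • f i = p i • f j) : aeval f φ = 0 := by
  have hfp : algebraMap K A (p j) • f = f j • (algebraMap K A ∘ p) := by
    ext i
    simpa only [Pi.smul_apply, smul_eq_mul, Function.comp_apply, Algebra.smul_def, mul_comm (f j)]
      using hf i
  have hpf : aeval (algebraMap K A ∘ p) φ = 0 := by
    rw [aeval_algebraMap_apply, aeval_eq_eval, hp, map_zero]
  have h : algebraMap K A (p j) ^ n * aeval f φ = 0 := by
    rw [← aeval_smul_of_isHomogeneous hφ, hfp, aeval_smul_of_isHomogeneous hφ, hpf, mul_zero]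
  exact (((isUnit_iff_ne_zero.2 hj).map (algebraMap K A)).pow n).mul_right_eq_zero.1 h

end HomogeneousPolynomials

section GradientAndHessian

variable {σ R : Type*} [CommRing R]

/-- The gradient of the polynomial `f`, evaluated at the point `p`. -/
noncomputable def gradientAt (f : MvPolynomial σ R) (p : σ → R) : σ → R :=
  fun i => eval p (pderiv i f)

/-- The Hessian matrix of the polynomial `f`, evaluated at the point `p`. -/
noncomputable def hessianAt (f : MvPolynomial σ R) (p : σ → R) : Matrix σ σ R :=
  Matrix.of fun i j => eval p (pderiv j (pderiv i f))

/-- The form `f` is nonsingular: its gradient vanishes at no point other than the origin, so that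
its projective zero locus has no singular rational point. -/
def IsNonsingularForm (f : MvPolynomial σ R) : Prop :=
  ∀ p, p ≠ 0 → gradientAt f p ≠ 0

/-- The polynomial `f` is a Morse function: all its critical points are nondegenerate. -/
def IsMorse [Fintype σ] [DecidableEq σ] (f : MvPolynomial σ R) : Prop :=
  ∀ p, gradientAt f p = 0 → (hessianAt f p).det ≠ 0

theorem gradientAt_sum {ι : Type*} (s : Finset ι) (f : ι → MvPolynomial σ R) (p : σ → R) :
    gradientAt (∑ k ∈ s, f k) p = ∑ k ∈ s, gradientAt (f k) p := by
  ext i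
  simp only [gradientAt, map_sum, Finset.sum_apply]

theorem gradientAt_smul_of_isHomogeneous {n : ℕ} {f : MvPolynomial σ R} (hf : f.IsHomogeneous n)
    (c : R) (p : σ → R) : gradientAt f (c • p) = c ^ (n - 1) • gradientAt f p :=
  funext fun _ => eval_smul_of_isHomogeneous hf.pderiv c p

theorem pderiv_comm (i j : σ) (f : MvPolynomial σ R) :
    pderiv i (pderiv j f) = pderiv j (pderiv i f) := by
  classical
  have h : ⁅pderiv (R := R) i, pderiv (R := R) j⁆ = 0 := by
    refine derivation_ext fun k => ?_
    simp only [Derivation.commutator_apply, pderiv_X, Pi.single_apply, Derivation.zero_apply]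
    split_ifs <;> simp
  simpa only [Derivation.commutator_apply, Derivation.zero_apply, sub_eq_zero] using
    DFunLike.congr_fun h f

theorem eval_eq_zero_of_gradientAt_eq_zero [Finite σ] [IsDomain R] [CharZero R] {n : ℕ}
    (hn : n ≠ 0) {f : MvPolynomial σ R} (hf : f.IsHomogeneous n) {p : σ → R}
    (hp : gradientAt f p = 0) : eval p f = 0 := by
  have := Fintype.ofFinite σ
  have hp' : ∀ i, eval p (pderiv i f) = 0 := congrFun hp
  have euler : n • eval p f = 0 := by
    simpa [hp'] using (congrArg (eval p) hf.sum_X_mul_pderiv).symm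
  exact (smul_eq_zero.1 euler).resolve_left hn

theorem isMorse_fin_two_iff {g : MvPolynomial (Fin 2) R} :
    IsMorse g ↔ ∀ x y, eval ![x, y] (pderiv 0 g) = 0 → eval ![x, y] (pderiv 1 g) = 0 →
      eval ![x, y] (pderiv 0 (pderiv 0 g)) * eval ![x, y] (pderiv 1 (pderiv 1 g)) -
        eval ![x, y] (pderiv 1 (pderiv 0 g)) ^ 2 ≠ 0 := by
  have h_det : ∀ p, (hessianAt g p).det = eval p (pderiv 0 (pderiv 0 g)) *
      eval p (pderiv 1 (pderiv 1 g)) - eval p (pderiv 1 (pderiv 0 g)) ^ 2 := by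
    intro p
    rw [Matrix.det_fin_two, sq]
    simp only [hessianAt, Matrix.of_apply, pderiv_comm (0 : Fin 2) 1]
  simp only [IsMorse, h_det, gradientAt, funext_iff, Fin.forall_fin_two, Pi.zero_apply, and_imp]
  exact (FinVec.forall_iff _).symm

end GradientAndHessian

section BinaryForms

variable {K : Type*} [Field K] {n : ℕ} {h : MvPolynomial (Fin 2) K}

theorem linear_dvd_of_eval_eq_zero (hh : h.IsHomogeneous n) {a b : K} (hab : ![a, b] ≠ 0)
    (h0 : eval ![a, b] h = 0) : C b * X 0 - C a * X 1 ∣ h := by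
  obtain ⟨j, hj⟩ := Function.ne_iff.1 hab
  set I := Ideal.span {(C b * X 0 - C a * X 1 : MvPolynomial (Fin 2) K)}
  let π := Ideal.Quotient.mkₐ K I
  have hX : b • π (X 0) = a • π (X 1) := by
    rw [← map_smul, ← map_smul, smul_eq_C_mul, smul_eq_C_mul]
    exact Ideal.Quotient.eq.2 (Ideal.mem_span_singleton_self _)
  have h_prop : ∀ i, ![a, b] j • π (X i) = ![a, b] i • π (X j) := by
    intro i
    fin_cases i <;> fin_cases j <;> simp [hX]
  have hπ : π h = 0 := by
    rw [← aeval_eq_zero_of_eval_eq_zero hh h0 hj h_prop]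
    exact DFunLike.congr_fun (aeval_unique π) h
  exact Ideal.mem_span_singleton.1 (Ideal.Quotient.eq_zero_iff_mem.1 hπ)

theorem gradientAt_linear_mul (a b : K) (k : MvPolynomial (Fin 2) K) :
    gradientAt ((C b * X 0 - C a * X 1) * k) ![a, b] = eval ![a, b] k • ![b, -a] := by
  ext i
  fin_cases i <;> simp [gradientAt, pderiv_X, mul_comm]

theorem sq_linear_dvd_iff_gradientAt_eq_zero [CharZero K] (hn : n ≠ 0) (hh : h.IsHomogeneous n)
    {a b : K} (hab : ![a, b] ≠ 0) :
    (C b * X 0 - C a * X 1) ^ 2 ∣ h ↔ gradientAt h ![a, b] = 0 := by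
  constructor
  · rintro ⟨k, rfl⟩
    rw [sq, mul_assoc, gradientAt_linear_mul]
    simp [mul_comm]
  · intro hgrad
    obtain ⟨k, hk⟩ := linear_dvd_of_eval_eq_zero hh hab
      (eval_eq_zero_of_gradientAt_eq_zero hn hh hgrad)
    obtain ⟨m, rfl⟩ : ∃ m, n = 1 + m := ⟨n - 1, by omega⟩
    have h_lin : (C b * X 0 - C a * X 1 : MvPolynomial (Fin 2) K).IsHomogeneous 1 :=
      (isHomogeneous_C_mul_X b 0).sub (isHomogeneous_C_mul_X a 1)
    have h_factor : h = (C b * X 0 - C a * X 1) * homogeneousComponent m k := by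
      rw [← homogeneousComponent_mul_of_left_isHomogeneous h_lin, ← hk,
        homogeneousComponent_eq_self hh]
    have h_normal : ![b, -a] ≠ 0 := by
      contrapose! hab
      simp_all
    have h_root : eval ![a, b] (homogeneousComponent m k) = 0 := by
      rw [h_factor, gradientAt_linear_mul] at hgrad
      exact (smul_eq_zero.1 hgrad).resolve_right h_normal
    rw [h_factor, sq]
    exact mul_dvd_mul_left _
      (linear_dvd_of_eval_eq_zero (homogeneousComponent_isHomogeneous m k) hab h_root)

theorem isNonsingularForm_of_dehomogenization [CharZero K] (hn : n ≠ 0) (hh : h.IsHomogeneous n)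
    (h_infty : eval ![0, 1] h ≠ 0)
    (h_affine : ∀ m, eval ![1, m] h = 0 → eval ![1, m] (pderiv 1 h) ≠ 0) :
    IsNonsingularForm h := by
  intro p hp hgrad
  by_cases hp0 : p 0 = 0
  · have hp1 : p 1 ≠ 0 := by
      contrapose! hp
      exact funext (Fin.forall_fin_two.2 ⟨hp0, hp⟩)
    have hpe : p = p 1 • ![0, 1] := funext (Fin.forall_fin_two.2 (by simp [hp0]))
    have hzero := eval_eq_zero_of_gradientAt_eq_zero hn hh hgrad
    rw [hpe, eval_smul_of_isHomogeneous hh] at hzero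
    exact mul_ne_zero (pow_ne_zero n hp1) h_infty hzero
  · have hgrad' : gradientAt h ((p 0)⁻¹ • p) = 0 := by
      rw [gradientAt_smul_of_isHomogeneous hh, hgrad, smul_zero]
    have hpe : (p 0)⁻¹ • p = ![1, (p 0)⁻¹ * p 1] :=
      funext (Fin.forall_fin_two.2 (by simp [hp0]))
    rw [hpe] at hgrad'
    exact h_affine _ (eval_eq_zero_of_gradientAt_eq_zero hn hh hgrad') (congrFun hgrad' 1)

theorem isNonsingularForm_iff_ne_zero_and_not_sq_dvd [CharZero K] (hn : n ≠ 0)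
    (hh : h.IsHomogeneous n) :
    IsNonsingularForm h ↔
      h ≠ 0 ∧ ∀ a b : K, (a, b) ≠ (0, 0) → ¬ (C b * X 0 - C a * X 1) ^ 2 ∣ h := by
  have h_point : ∀ a b : K, (a, b) ≠ (0, 0) ↔ ![a, b] ≠ 0 := by simp
  constructor
  · refine fun H => ⟨?_, fun a b hab hdvd => ?_⟩
    · rintro rfl
      exact H 1 one_ne_zero (by ext; simp [gradientAt])
    · have hab' := (h_point a b).1 hab
      exact H _ hab' ((sq_linear_dvd_iff_gradientAt_eq_zero hn hh hab').1 hdvd)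
  · rintro ⟨-, H⟩ p hp hgrad
    obtain ⟨a, b, rfl⟩ : ∃ a b, p = ![a, b] := ⟨p 0, p 1, funext (Fin.forall_fin_two.2 (by simp))⟩
    exact H a b ((h_point a b).2 hp) ((sq_linear_dvd_iff_gradientAt_eq_zero hn hh hp).2 hgrad)

end BinaryForms

section Calculus

variable {𝕜 σ : Type*} [NontriviallyNormedField 𝕜]

theorem hasFDerivAt_eval [Fintype σ] (f : MvPolynomial σ 𝕜) (p : σ → 𝕜) :
    HasFDerivAt (fun p => eval p f)
      (∑ i, gradientAt f p i • ContinuousLinearMap.proj (R := 𝕜) (φ := fun _ : σ => 𝕜) i) p := by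
  classical
  simp only [gradientAt]
  induction f using MvPolynomial.induction_on with
  | C a =>
    simp only [eval_C]
    convert! hasFDerivAt_const (𝕜 := 𝕜) a p using 1
    ext v
    simp
  | add f g hf hg =>
    simp only [map_add]
    convert! hf.add hg using 1
    ext v
    simp [add_mul, Finset.sum_add_distrib]
  | mul_X f j hf =>
    have hmul := hf.mul (hasFDerivAt_apply (𝕜 := 𝕜) j p)
    simp only [map_mul, eval_X]
    convert! hmul using 1
    ext v
    simp [pderiv_X, Pi.single_apply, apply_ite (eval p), add_mul, Finset.sum_add_distrib,
      Finset.mul_sum, mul_assoc]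

theorem hasFDerivAt_gradientAt [Fintype σ] [DecidableEq σ] [CompleteSpace 𝕜] (f : MvPolynomial σ 𝕜)
    (p : σ → 𝕜) :
    HasFDerivAt (gradientAt f) (Matrix.toLin' (hessianAt f p)).toContinuousLinearMap p := by
  refine hasFDerivAt_pi'.2 fun i => ?_
  convert! hasFDerivAt_eval (pderiv i f) p using 1
  ext v
  simp [hessianAt, gradientAt, Matrix.mulVec, dotProduct]

theorem continuous_eval_linearMap [CompleteSpace 𝕜] {V : Type*} [AddCommGroup V] [Module 𝕜 V]
    [TopologicalSpace V] [IsTopologicalAddGroup V] [ContinuousSMul 𝕜 V] [T2Space V]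
    [FiniteDimensional 𝕜 V] (L : V →ₗ[𝕜] MvPolynomial σ 𝕜) :
    Continuous fun x : V × (σ → 𝕜) => eval x.2 (L x.1) := by
  let b := Module.finBasis 𝕜 V
  have h_expand : ∀ x : V × (σ → 𝕜),
      eval x.2 (L x.1) = ∑ i, b.coord i x.1 * eval x.2 (L (b i)) := by
    intro x
    conv_lhs => rw [← b.sum_repr x.1]
    simp only [map_sum, map_smul, smul_eval, Module.Basis.coord_apply]
  simp only [h_expand]
  exact continuous_finsetSum _ fun i _ =>
    ((b.coord i).continuous_of_finiteDimensional.comp continuous_fst).mul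
      ((MvPolynomial.continuous_eval _).comp continuous_snd)

end Calculus

section HomogenizedGradient

variable {σ R : Type*} [CommRing R]

/-- The homogenization of the gradient of a polynomial `f` of degree at most `n + 1`, as a map in
the coordinates `x = (p, z)`; its components are forms of degree `n`, and the affine chart is
`z = 1`. -/
noncomputable def homogenizedGradient (n : ℕ) (f : MvPolynomial σ R) (x : (σ → R) × R) : σ → R :=
  ∑ k ∈ Finset.range (n + 1), x.2 ^ (n - k) • gradientAt (homogeneousComponent (k + 1) f) x.1

theorem homogenizedGradient_smul (n : ℕ) (f : MvPolynomial σ R) (c : R) (x : (σ → R) × R) :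
    homogenizedGradient n f (c • x) = c ^ n • homogenizedGradient n f x := by
  simp only [homogenizedGradient, Finset.smul_sum, smul_smul, Prod.smul_fst, Prod.smul_snd,
    gradientAt_smul_of_isHomogeneous (homogeneousComponent_isHomogeneous _ f)]
  refine Finset.sum_congr rfl fun k hk => ?_
  have hkn : n = (n - k) + k := by have := Finset.mem_range.1 hk; omega
  rw [smul_eq_mul, mul_pow, Nat.add_sub_cancel, mul_right_comm, ← pow_add, ← hkn]

theorem homogenizedGradient_zero_right (n : ℕ) (f : MvPolynomial σ R) (p : σ → R) :
    homogenizedGradient n f (p, 0) = gradientAt (homogeneousComponent (n + 1) f) p := by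
  rw [homogenizedGradient, Finset.sum_range_succ, Finset.sum_eq_zero, zero_add, Nat.sub_self,
    pow_zero, one_smul]
  intro k hk
  rw [zero_pow (by have := Finset.mem_range.1 hk; omega), zero_smul]

theorem homogenizedGradient_one_right {n : ℕ} {f : MvPolynomial σ R} (hf : f.totalDegree ≤ n + 1)
    (p : σ → R) : homogenizedGradient n f (p, 1) = gradientAt f p := by
  have h_sum : f = ∑ k ∈ Finset.range (n + 2), homogeneousComponent k f := by
    conv_lhs => rw [← sum_homogeneousComponent f]
    refine Finset.sum_subset (Finset.range_mono (by omega)) fun k _ hk => ?_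
    exact homogeneousComponent_eq_zero k f (by simpa using hk)
  have h_const : gradientAt (homogeneousComponent 0 f) p = 0 := by
    ext i
    simp [gradientAt, homogeneousComponent_zero]
  conv_rhs => rw [h_sum, gradientAt_sum, Finset.sum_range_succ', h_const, add_zero]
  simp only [homogenizedGradient, one_pow, one_smul]

variable {K V : Type*} [Field K] [AddCommGroup V] [Module K V] [Fintype σ] [DecidableEq σ]

/-- The pairs of a parameter `v` and a point `x = (p, z)` which is, in homogeneous coordinates, not
a degenerate critical point of `L v`: a point at infinity (`z = 0`) must not be critical at all,
and a finite point may be critical if the Hessian does not degenerate there. -/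
def nondegenerateLocus (L : V →ₗ[K] MvPolynomial σ K) (n : ℕ) : Set (V × ((σ → K) × K)) :=
  {x | homogenizedGradient n (L x.1) x.2 ≠ 0} ∪
    {x | x.2.2 ≠ 0 ∧ (hessianAt (L x.1) (x.2.2⁻¹ • x.2.1)).det ≠ 0}

theorem smul_mem_nondegenerateLocus_iff (L : V →ₗ[K] MvPolynomial σ K) (n : ℕ) (v : V)
    (x : (σ → K) × K) {c : K} (hc : c ≠ 0) :
    (v, c • x) ∈ nondegenerateLocus L n ↔ (v, x) ∈ nondegenerateLocus L n := by
  have h_chart : (x.2⁻¹ * c⁻¹) • c • x.1 = x.2⁻¹ • x.1 := by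
    rw [smul_smul, inv_mul_cancel_right₀ hc]
  simp [nondegenerateLocus, homogenizedGradient_smul, h_chart, hc]

theorem isNonsingularForm_and_isMorse_iff {L : V →ₗ[K] MvPolynomial σ K} {n : ℕ} {v : V}
    (hL : (L v).totalDegree ≤ n + 1) :
    IsNonsingularForm (homogeneousComponent (n + 1) (L v)) ∧ IsMorse (L v) ↔
      ∀ x ≠ 0, (v, x) ∈ nondegenerateLocus L n := by
  constructor
  · rintro ⟨h_form, h_morse⟩ ⟨p, z⟩ hx
    rcases eq_or_ne z 0 with rfl | hz
    · left
      simpa [homogenizedGradient_zero_right] using h_form p (by simpa using hx)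
    · rw [← smul_mem_nondegenerateLocus_iff L n v _ (inv_ne_zero hz), Prod.smul_mk, smul_eq_mul,
        inv_mul_cancel₀ hz, nondegenerateLocus]
      by_cases hp : gradientAt (L v) (z⁻¹ • p) = 0
      · right
        simpa using h_morse _ hp
      · left
        simpa [homogenizedGradient_one_right hL] using hp
  · intro h
    constructor
    · intro p hp hgrad
      simpa [nondegenerateLocus, homogenizedGradient_zero_right, hgrad] using h (p, 0) (by simpa)
    · intro p hgrad
      simpa [nondegenerateLocus, homogenizedGradient_one_right hL, hgrad] using h (p, 1) (by simp)

end HomogenizedGradient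

section Openness

theorem isOpen_setOf_forall_ne_zero {V E : Type*} [TopologicalSpace V] [NormedAddCommGroup E]
    [NormedSpace ℝ E] [ProperSpace E] {W : Set (V × E)} (hW : IsOpen W)
    (hcone : ∀ v x (c : ℝ), c ≠ 0 → (v, c • x) ∈ W → (v, x) ∈ W) :
    IsOpen {v | ∀ x ≠ 0, (v, x) ∈ W} := by
  have h_sphere : {v | ∀ x ≠ 0, (v, x) ∈ W} =
      {v | ∀ x ∈ Metric.sphere (0 : E) 1, (v, x) ∈ W} := by
    ext v
    refine ⟨fun h x hx => h x (ne_zero_of_mem_unit_sphere ⟨x, hx⟩), fun h x hx => ?_⟩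
    refine hcone v x ‖x‖⁻¹ (inv_ne_zero (norm_ne_zero_iff.2 hx)) (h _ ?_)
    rw [mem_sphere_zero_iff_norm, norm_smul, norm_inv, norm_norm,
      inv_mul_cancel₀ (norm_ne_zero_iff.2 hx)]
  rw [h_sphere, isOpen_iff_eventually]
  intro v hv
  exact (isCompact_sphere (0 : E) 1).eventually_forall_of_forall_eventually
    (P := fun v x => (v, x) ∈ W) fun x hx => hW.eventually_mem (hv x hx)

variable {σ V : Type*} [AddCommGroup V] [Module ℝ V] [TopologicalSpace V] [IsTopologicalAddGroup V]
  [ContinuousSMul ℝ V] [T2Space V] [FiniteDimensional ℝ V]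

theorem continuous_gradientAt_linearMap (L : V →ₗ[ℝ] MvPolynomial σ ℝ) :
    Continuous fun x : V × (σ → ℝ) => gradientAt (L x.1) x.2 :=
  continuous_pi fun i => continuous_eval_linearMap ((pderiv i).toLinearMap ∘ₗ L)

theorem continuous_hessianAt_linearMap (L : V →ₗ[ℝ] MvPolynomial σ ℝ) :
    Continuous fun x : V × (σ → ℝ) => hessianAt (L x.1) x.2 :=
  continuous_matrix fun i j =>
    continuous_eval_linearMap ((pderiv j).toLinearMap ∘ₗ (pderiv i).toLinearMap ∘ₗ L)

theorem continuous_homogenizedGradient_linearMap (L : V →ₗ[ℝ] MvPolynomial σ ℝ) (n : ℕ) :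
    Continuous fun x : V × ((σ → ℝ) × ℝ) => homogenizedGradient n (L x.1) x.2 := by
  simp only [homogenizedGradient]
  refine continuous_finsetSum _ fun k _ => ?_
  have h_pow : Continuous fun x : V × ((σ → ℝ) × ℝ) => x.2.2 ^ (n - k) := by fun_prop
  have h_point : Continuous fun x : V × ((σ → ℝ) × ℝ) => (x.1, x.2.1) := by fun_prop
  have h_gradient :=
    (continuous_gradientAt_linearMap (homogeneousComponent (k + 1) ∘ₗ L)).comp' h_point
  exact h_pow.smul h_gradient

theorem isOpen_setOf_isNonsingularForm [Finite σ] {n : ℕ} (L : V →ₗ[ℝ] MvPolynomial σ ℝ)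
    (hL : ∀ v, (L v).IsHomogeneous n) : IsOpen {v | IsNonsingularForm (L v)} := by
  have := Fintype.ofFinite σ
  refine isOpen_setOf_forall_ne_zero (W := {x | gradientAt (L x.1) x.2 ≠ 0})
    (isOpen_ne_fun (continuous_gradientAt_linearMap L) continuous_const) ?_
  intro v p c _ hcp hp
  refine hcp ?_
  rw [gradientAt_smul_of_isHomogeneous (hL v), hp, smul_zero]

variable [Fintype σ] [DecidableEq σ]

theorem isOpen_nondegenerateLocus (L : V →ₗ[ℝ] MvPolynomial σ ℝ) (n : ℕ) :
    IsOpen (nondegenerateLocus L n) := by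
  refine (isOpen_ne_fun (continuous_homogenizedGradient_linearMap L n) continuous_const).union ?_
  have h_finite : IsOpen {x : V × ((σ → ℝ) × ℝ) | x.2.2 ≠ 0} :=
    isOpen_ne_fun (by fun_prop) continuous_const
  have h_chart : ContinuousOn (fun x : V × ((σ → ℝ) × ℝ) => (x.1, x.2.2⁻¹ • x.2.1))
      {x | x.2.2 ≠ 0} :=
    continuousOn_fst.prodMk ((ContinuousOn.inv₀ (by fun_prop) fun _ hx => hx).smul (by fun_prop))
  exact ((continuous_hessianAt_linearMap L).matrix_det.comp_continuousOn
    h_chart).isOpen_inter_preimage h_finite isOpen_ne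

theorem isOpen_setOf_isNonsingularForm_and_isMorse {L : V →ₗ[ℝ] MvPolynomial σ ℝ} {n : ℕ}
    (hL : ∀ v, (L v).totalDegree ≤ n + 1) :
    IsOpen {v | IsNonsingularForm (homogeneousComponent (n + 1) (L v)) ∧ IsMorse (L v)} := by
  simp only [isNonsingularForm_and_isMorse_iff (hL _)]
  exact isOpen_setOf_forall_ne_zero (isOpen_nondegenerateLocus L n) fun v x c hc =>
    (smul_mem_nondegenerateLocus_iff L n v x hc).1

end Openness

section Density

theorem ae_forall_eq_imp_det_ne_zero {E : Type*} [NormedAddCommGroup E] [NormedSpace ℝ E]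
    [FiniteDimensional ℝ E] [MeasurableSpace E] [BorelSpace E] (μ : Measure E) [μ.IsAddHaarMeasure]
    {f : E → E} {f' : E → E →L[ℝ] E} (hf : ∀ x, HasFDerivAt f (f' x) x) :
    ∀ᵐ c ∂μ, ∀ x, f x = c → (f' x).det ≠ 0 := by
  have h_null : μ (f '' {x | (f' x).det = 0}) = 0 :=
    addHaar_image_eq_zero_of_det_fderivWithin_eq_zero μ
      (fun x _ => (hf x).hasFDerivWithinAt) fun _ hx => hx
  filter_upwards [measure_eq_zero_iff_ae_notMem.1 h_null] with c hc x hx hdet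
  exact hc ⟨x, hdet, hx⟩

theorem ae_forall_eq_imp_deriv_ne_zero {f f' : ℝ → ℝ} (hf : ∀ x, HasDerivAt f (f' x) x) :
    ∀ᵐ c, ∀ x, f x = c → f' x ≠ 0 := by
  filter_upwards [ae_forall_eq_imp_det_ne_zero volume fun x => (hf x).hasFDerivAt] with c hc x hx
  simpa [ContinuousLinearMap.det] using hc x hx

theorem ae_isMorse_sub_linear {σ : Type*} [Fintype σ] [DecidableEq σ] (g : MvPolynomial σ ℝ) :
    ∀ᵐ c : σ → ℝ, IsMorse (g - ∑ i, c i • X i) := by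
  have h_pderiv : ∀ (c : σ → ℝ) i, pderiv i (g - ∑ j, c j • X j) = pderiv i g - C (c i) := by
    intro c i
    simp [pderiv_X, Pi.single_apply, smul_eq_C_mul]
  filter_upwards [ae_forall_eq_imp_det_ne_zero volume (hasFDerivAt_gradientAt g)] with c hc p hp
  have h_gradient : gradientAt g p = c :=
    funext fun i => by simpa [gradientAt, h_pderiv, sub_eq_zero] using congrFun hp i
  have h_hessian : hessianAt (g - ∑ i, c i • X i) p = hessianAt g p := by
    ext i j
    simp [hessianAt, h_pderiv]
  rw [h_hessian]
  simpa using hc p h_gradient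

theorem ae_isNonsingularForm_sub_pow {h : MvPolynomial (Fin 2) ℝ} {n : ℕ} (hn : n ≠ 0)
    (hh : h.IsHomogeneous n) (h_infty : eval ![0, 1] h ≠ 0) :
    ∀ᵐ s : ℝ, IsNonsingularForm (h - s • X 0 ^ n) := by
  have h_deriv : ∀ m, HasDerivAt (fun m => eval ![1, m] h) (eval ![1, m] (pderiv 1 h)) m := by
    intro m
    have h_line : HasDerivAt (fun m : ℝ => ![1, m]) ![0, 1] m :=
      hasDerivAt_pi.2 (Fin.forall_fin_two.2 ⟨hasDerivAt_const m 1, hasDerivAt_id m⟩)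
    convert! (hasFDerivAt_eval h ![1, m]).comp_hasDerivAt m h_line using 1
    simp [gradientAt]
  filter_upwards [ae_forall_eq_imp_deriv_ne_zero h_deriv] with s hs
  have h_pow : (s • X 0 ^ n : MvPolynomial (Fin 2) ℝ).IsHomogeneous n := by
    simpa only [smul_eq_C_mul] using isHomogeneous_C_mul_X_pow s 0 n
  refine isNonsingularForm_of_dehomogenization hn (hh.sub h_pow) ?_ fun m hm => ?_
  · simpa [hn] using h_infty
  · simpa using hs m (by simpa [sub_eq_zero] using hm)

theorem mem_closure_of_ae_mem {V E : Type*} [TopologicalSpace V] [TopologicalSpace E]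
    [MeasurableSpace E] {μ : Measure E} [μ.IsOpenPosMeasure] {S : Set V} {γ : E → V}
    (hγ : Continuous γ) (h : ∀ᵐ e ∂μ, γ e ∈ S) (e : E) : γ e ∈ closure S :=
  map_mem_closure hγ (Measure.dense_of_ae h e) fun _ he => he

variable {V : Type*} [AddCommGroup V] [Module ℝ V] [TopologicalSpace V] [IsTopologicalAddGroup V]
  [ContinuousSMul ℝ V]

theorem dense_setOf_isMorse {σ : Type*} [Fintype σ] [DecidableEq σ] (L : V →ₗ[ℝ] MvPolynomial σ ℝ)
    (hL : ∀ i, X i ∈ LinearMap.range L) : Dense {v | IsMorse (L v)} := by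
  choose u hu using hL
  intro v
  have h_ae : ∀ᵐ c : σ → ℝ, v - ∑ i, c i • u i ∈ {v | IsMorse (L v)} := by
    simpa [hu] using ae_isMorse_sub_linear (L v)
  simpa using mem_closure_of_ae_mem (by fun_prop) h_ae 0

theorem dense_setOf_isNonsingularForm (L : V →ₗ[ℝ] MvPolynomial (Fin 2) ℝ) {n : ℕ} (hn : n ≠ 0)
    (hL : ∀ v, (L v).IsHomogeneous n) (hX : ∀ i, X i ^ n ∈ LinearMap.range L) :
    Dense {v | IsNonsingularForm (L v)} := by
  choose u hu using hX
  have h_infty : Dense {v | eval ![0, 1] (L v) ≠ 0} := by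
    intro v
    have h_ae : ∀ᵐ s : ℝ, v - s • u 1 ∈ {v | eval ![0, 1] (L v) ≠ 0} := by
      filter_upwards [Measure.ae_ne volume (eval ![0, 1] (L v))] with s hs
      simpa [hu, sub_eq_zero] using hs.symm
    simpa using mem_closure_of_ae_mem (by fun_prop) h_ae 0
  refine (h_infty.mono fun v hv => ?_).of_closure
  have h_ae : ∀ᵐ s : ℝ, v - s • u 0 ∈ {v | IsNonsingularForm (L v)} := by
    simpa [hu] using ae_isNonsingularForm_sub_pow hn (hL v) hv
  simpa using mem_closure_of_ae_mem (by fun_prop) h_ae 0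

end Density

section CoefficientSpace

instance finite_exponents (d : ℕ) : Finite {q : ℕ × ℕ // q.1 + q.2 ≤ d} :=
  ((Set.finite_Iic (d, d)).subset fun q hq => Prod.mk_le_mk.2
    (by have : q.1 + q.2 ≤ d := hq; omega)).to_subtype

/-- `polyOf d` as a linear map on the space of coefficient tuples. -/
noncomputable def polyOfLinear (d : ℕ) :
    ({q : ℕ × ℕ // q.1 + q.2 ≤ d} → ℝ) →ₗ[ℝ] MvPolynomial (Fin 2) ℝ where
  toFun := polyOf d
  map_add' v w := by
    simp only [polyOf, Pi.add_apply, C_add, add_mul]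
    exact finsum_add_distrib (Set.toFinite _) (Set.toFinite _)
  map_smul' c v := by
    simp only [polyOf, Pi.smul_apply, smul_eq_mul, C_mul, RingHom.id_apply, smul_eq_C_mul,
      mul_assoc]
    exact (mul_finsum _ _).symm

theorem totalDegree_polyOf_le (d : ℕ) (v : {q : ℕ × ℕ // q.1 + q.2 ≤ d} → ℝ) :
    (polyOf d v).totalDegree ≤ d := by
  have := Fintype.ofFinite {q : ℕ × ℕ // q.1 + q.2 ≤ d}
  rw [polyOf, finsum_eq_sum_of_fintype]
  refine totalDegree_finsetSum_le fun q _ => le_trans ?_ q.2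
  exact ((isHomogeneous_C_mul_X_pow _ 0 _).mul (isHomogeneous_X_pow 1 _)).totalDegree_le

theorem X_pow_mem_range_polyOfLinear {d k : ℕ} (hk : k ≤ d) (i : Fin 2) :
    X i ^ k ∈ LinearMap.range (polyOfLinear d) := by
  classical
  have h_single : ∀ q, polyOf d (Pi.single q 1) = X 0 ^ q.1.1 * X 1 ^ q.1.2 := by
    intro q
    rw [polyOf, finsum_eq_single _ q fun r hr => by simp [hr]]
    simp
  fin_cases i
  · exact ⟨Pi.single ⟨(k, 0), by simpa⟩ 1, (h_single _).trans (by simp)⟩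
  · exact ⟨Pi.single ⟨(0, k), by simpa⟩ 1, (h_single _).trans (by simp)⟩

theorem morseGeneric_iff {d : ℕ} (hd : d ≠ 0) (g : MvPolynomial (Fin 2) ℝ) :
    MorseGeneric d g ↔ IsNonsingularForm (homogeneousComponent d g) ∧ IsMorse g := by
  rw [isNonsingularForm_iff_ne_zero_and_not_sq_dvd hd (homogeneousComponent_isHomogeneous d g),
    isMorse_fin_two_iff, and_assoc]
  rfl

end CoefficientSpace

theorem morseGeneric_isOpen_dense (d : ℕ) (hd : 1 ≤ d) :
    IsOpen {v : {q : ℕ × ℕ // q.1 + q.2 ≤ d} → ℝ | MorseGeneric d (polyOf d v)} ∧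
    Dense {v : {q : ℕ × ℕ // q.1 + q.2 ≤ d} → ℝ | MorseGeneric d (polyOf d v)} := by
  obtain ⟨n, rfl⟩ : ∃ n, d = n + 1 := ⟨d - 1, by omega⟩
  simp only [morseGeneric_iff n.succ_ne_zero]
  let L := polyOfLinear (n + 1)
  let topForm := homogeneousComponent (n + 1) ∘ₗ L
  have h_top : ∀ v, (topForm v).IsHomogeneous (n + 1) := fun v =>
    homogeneousComponent_isHomogeneous (n + 1) (L v)
  have h_top_range : ∀ i, X i ^ (n + 1) ∈ LinearMap.range topForm := by
    intro i
    obtain ⟨v, hv⟩ := X_pow_mem_range_polyOfLinear le_rfl i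
    exact ⟨v, (congrArg _ hv).trans (homogeneousComponent_eq_self (isHomogeneous_X_pow i _))⟩
  have h_X : ∀ i, X i ∈ LinearMap.range L := fun i => by
    simpa only [pow_one] using X_pow_mem_range_polyOfLinear hd i
  exact ⟨isOpen_setOf_isNonsingularForm_and_isMorse (L := L) (totalDegree_polyOf_le (n + 1)),
    (dense_setOf_isNonsingularForm topForm n.succ_ne_zero h_top h_top_range).inter_of_isOpen_left
      (dense_setOf_isMorse L h_X) (isOpen_setOf_isNonsingularForm topForm h_top)⟩
end
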